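/- Let f ∈ L¹(ℝ) with ∫_ℝ f(y) dy ≠ 0, and let g(x) = p.v.∫_ℝ f(y)/(y−x) dy be its Hilbert transform. Then limsup_{t→0⁺} t·|{x : |g(x)| > t}| ≥ 2|∫_ℝ f(y) dy| > 0; in particular g is not integrable on ℝ. -/

import Mathlib

open MeasureTheory Filter Topology

/-!
Write `I` for the integral of `f`. Far away `g x` looks like `-I / x`, and
`|{x | |I / x| > t}| = 2 * |I| / t`; the claim is that the error `g x + I / x` is negligible in weak
`L¹` near infinity, which gives the full limit `t * |{|g| > t}| → 2 * |I|` as `t → 0⁺`. If `f` has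
compact support, the error is `o(1 / |x|)`. A general `f` is compactly supported up to a part of
small `L¹` norm, and the weak (1,1) inequality controls the Hilbert transform of that part.

For the weak (1,1) inequality, the Stieltjes transform `F` of a finite positive measure maps the
upper half-plane to itself, and there `F / (F + t * i)` has nonnegative real part, which is at
least `1 / 2` where `|F| ≥ t`. Moving the line of integration to infinity bounds the integral of
this real part by a multiple of `mass / t`. The real parts of the boundary values are conjugate
Poisson integrals; these are averages of sharp truncations, hence converge to principal values.
-/

section Distribution

open Set

variable {α E : Type*} [MeasurableSpace α] [NormedAddCommGroup E] {μ : Measure α}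

theorem measure_lt_norm_le_of_tendsto_ae {u : ℕ → α → E} {v : α → E} {t : ℝ} {B : ENNReal}
    (huv : ∀ᵐ x ∂μ, Tendsto (fun n ↦ u n x) atTop (𝓝 (v x)))
    (hB : ∀ n, μ {x | t < ‖u n x‖} ≤ B) : μ {x | t < ‖v x‖} ≤ B := by
  set s : ℕ → Set α := fun N ↦ ⋂ n ≥ N, {x | t < ‖u n x‖}
  have hs : Monotone s := fun M N hMN ↦
    biInter_subset_biInter_left fun n (hn : N ≤ n) ↦ hMN.trans hn
  have hv : {x | t < ‖v x‖} ≤ᵐ[μ] ⋃ N, s N := by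
    filter_upwards [huv] with x hx htx
    obtain ⟨N, hN⟩ := eventually_atTop.1 (hx.norm.eventually (lt_mem_nhds htx))
    exact mem_iUnion.2 ⟨N, mem_iInter₂.2 hN⟩
  calc μ {x | t < ‖v x‖} ≤ μ (⋃ N, s N) := measure_mono_ae hv
    _ = ⨆ N, μ (s N) := hs.measure_iUnion
    _ ≤ B := iSup_le fun N ↦ (measure_mono (biInter_subset_of_mem le_rfl)).trans (hB N)

theorem measure_add_lt_norm_add_le (μ : Measure α) (u v : α → E) (r s : ℝ) :
    μ {x | r + s < ‖u x + v x‖} ≤ μ {x | r < ‖u x‖} + μ {x | s < ‖v x‖} := by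
  refine (measure_mono fun x hx ↦ ?_).trans (measure_union_le _ _)
  by_contra! h
  simp only [mem_union, mem_ofPred_eq, not_or, not_lt] at h hx
  linarith [norm_add_le (u x) (v x)]

theorem measure_add_lt_norm_le (μ : Measure α) (u v : α → E) (S : Set α) (r s : ℝ) :
    μ {x | r + s < ‖u x‖} ≤
      μ {x | r < ‖v x‖} + (μ.restrict S {x | s < ‖u x - v x‖} + μ Sᶜ) := by
  set D := {x | s < ‖u x - v x‖}
  have hD : μ D ≤ μ.restrict S D + μ Sᶜ :=
    (measure_le_inter_add_sdiff μ D S).trans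
      (add_le_add (Measure.le_restrict_apply S D) (measure_mono (sdiff_subset_compl D S)))
  simpa only [add_sub_cancel] using
    (measure_add_lt_norm_add_le μ v (fun x ↦ u x - v x) r s).trans (by gcongr)

theorem tendsto_mul_measure_lt_norm_nhdsGT_zero {u : α → E} (hu : Integrable u μ) :
    Tendsto (fun t : ℝ ↦ t * μ.real {x | t < ‖u x‖}) (𝓝[>] 0) (𝓝 0) := by
  have hmeas (t : ℝ) : NullMeasurableSet {x | t < ‖u x‖} μ :=
    nullMeasurableSet_lt aemeasurable_const hu.norm.aemeasurable
  have hlim : Tendsto (fun t : ℝ ↦ ∫ x, {x | t < ‖u x‖}.indicator (fun _ ↦ t) x ∂μ)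
      (𝓝[>] 0) (𝓝 (∫ _, (0 : ℝ) ∂μ)) := by
    refine tendsto_integral_filter_of_dominated_convergence (fun x ↦ ‖u x‖)
      (.of_forall fun t ↦ aestronglyMeasurable_const.indicator₀ (hmeas t)) ?_ hu.norm
      (.of_forall fun x ↦ ?_)
    · filter_upwards [self_mem_nhdsWithin] with t (ht : 0 < t)
      refine .of_forall fun x ↦ ?_
      rw [norm_indicator_eq_indicator_norm, Real.norm_of_nonneg ht.le]
      exact indicator_le' (fun y (hy : t < ‖u y‖) ↦ hy.le) (fun _ _ ↦ norm_nonneg _) x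
    · have hid : Tendsto (fun t : ℝ ↦ t) (𝓝[>] 0) (𝓝 0) := nhdsWithin_le_nhds
      refine squeeze_zero' ?_ ?_ hid <;>
        filter_upwards [self_mem_nhdsWithin] with t (ht : 0 < t)
      · exact indicator_nonneg (fun _ _ ↦ ht.le) x
      · exact indicator_le_self' (fun _ _ ↦ ht.le) x
  simpa [integral_indicator₀ (hmeas _), mul_comm] using hlim

end Distribution

section InverseTail

open Metric Set

variable {E : Type*} [NormedAddCommGroup E] [NormedSpace ℝ E]

theorem volume_lt_norm_inv_smul (c : E) {s : ℝ} (hs : 0 < s) :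
    volume {x : ℝ | s < ‖x⁻¹ • c‖} = ENNReal.ofReal (2 * ‖c‖ / s) := by
  have hset : {x : ℝ | s < ‖x⁻¹ • c‖} = ball 0 (‖c‖ / s) \ {0} := by
    ext x
    rcases eq_or_ne x 0 with rfl | hx
    · simp [hs.le]
    · have hx' : 0 < |x| := abs_pos.2 hx
      simp [norm_smul, hx, ← div_eq_inv_mul, lt_div_iff₀ hx', lt_div_iff₀ hs, mul_comm]
  rw [hset, measure_sdiff_null (by simp), Real.volume_ball, mul_div_assoc]

/-- The weak `L¹` quasinorm of `u` outside the ball of radius `R` tends to zero as `R → ∞`. The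
weak norm is encoded by `t * |{x | t < ‖u x‖}| ≤ κ` for all `t > 0`, written
as a bound in `ℝ≥0∞` so that it also says that these sets have finite measure. -/
def VanishesAtInftyWeakL1 (u : ℝ → E) : Prop :=
  ∀ κ > 0, ∃ R, ∀ t > 0,
    volume.restrict (closedBall 0 R)ᶜ {x | t < ‖u x‖} ≤ ENNReal.ofReal (κ / t)

theorem volume_real_lt_norm_mem_Icc_of_sub_inv_smul {g : ℝ → E} {c : E} {R δ t η : ℝ}
    (hδ : 0 < δ) (hδ1 : δ < 1) (ht : 0 < t) (hη : 0 ≤ η)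
    (h : volume.restrict (closedBall 0 R)ᶜ {x | δ * t < ‖g x - x⁻¹ • c‖} ≤ ENNReal.ofReal η) :
    volume.real {x | t < ‖g x‖} ∈
      Icc (2 * ‖c‖ / ((1 + δ) * t) - (η + volume.real (closedBall (0 : ℝ) R)))
        (2 * ‖c‖ / ((1 - δ) * t) + (η + volume.real (closedBall (0 : ℝ) R))) := by
  have : 0 < 1 - δ := sub_pos.2 hδ1
  have herr : volume.restrict (closedBall 0 R)ᶜ {x | δ * t < ‖g x - x⁻¹ • c‖} +
      volume (closedBall (0 : ℝ) R)ᶜᶜ ≤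
        ENNReal.ofReal (η + volume.real (closedBall (0 : ℝ) R)) := by
    rw [ENNReal.ofReal_add hη measureReal_nonneg, compl_compl,
      ofReal_measureReal measure_closedBall_lt_top.ne]
    gcongr
  have hupper := (measure_add_lt_norm_le volume g (fun x ↦ x⁻¹ • c) (closedBall 0 R)ᶜ
    ((1 - δ) * t) (δ * t)).trans (add_le_add_right herr _)
  rw [volume_lt_norm_inv_smul c (by positivity), show (1 - δ) * t + δ * t = t by ring,
    ← ENNReal.ofReal_add (by positivity) (by positivity)] at hupper
  have hlower := (measure_add_lt_norm_le volume (fun x ↦ x⁻¹ • c) g (closedBall 0 R)ᶜ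
    t (δ * t)).trans (add_le_add_right (by simpa only [norm_sub_rev] using herr) _)
  rw [volume_lt_norm_inv_smul c (by positivity),
    ← ofReal_measureReal (ne_top_of_le_ne_top ENNReal.ofReal_ne_top hupper),
    ← ENNReal.ofReal_add measureReal_nonneg (by positivity)] at hlower
  constructor
  · rw [sub_le_iff_le_add, one_add_mul]
    exact (ENNReal.ofReal_le_ofReal_iff (by positivity)).1 hlower
  · exact ENNReal.toReal_le_of_le_ofReal (by positivity) hupper

theorem VanishesAtInftyWeakL1.eventually_mul_volume_mem_Icc {g : ℝ → E} {c : E}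
    (h : VanishesAtInftyWeakL1 fun x ↦ g x - x⁻¹ • c) {δ : ℝ} (hδ : 0 < δ) (hδ1 : δ < 1) :
    ∀ᶠ t in 𝓝[>] 0, t * volume.real {x | t < ‖g x‖} ∈
      Icc (2 * ‖c‖ / (1 + δ) - 2 * δ) (2 * ‖c‖ / (1 - δ) + 2 * δ) := by
  obtain ⟨R, hR⟩ := h (δ ^ 2) (by positivity)
  set V := volume.real (closedBall (0 : ℝ) R)
  have hsmall : ∀ᶠ t in 𝓝[>] (0 : ℝ), t * V < δ := by
    have : Tendsto (fun t : ℝ ↦ t * V) (𝓝 0) (𝓝 0) := by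
      simpa using (continuous_mul_const V).tendsto 0
    exact nhdsWithin_le_nhds (this.eventually (gt_mem_nhds hδ))
  filter_upwards [hsmall, self_mem_nhdsWithin] with t htV (ht : 0 < t)
  have h1δ : 0 < 1 - δ := sub_pos.2 hδ1
  have herr : t * (δ ^ 2 / (δ * t) + V) ≤ 2 * δ := by
    have : t * (δ ^ 2 / (δ * t)) = δ := by field_simp
    linarith
  obtain ⟨hlower, hupper⟩ := volume_real_lt_norm_mem_Icc_of_sub_inv_smul hδ hδ1 ht
    (by positivity) (hR (δ * t) (by positivity))
  constructor
  · calc 2 * ‖c‖ / (1 + δ) - 2 * δ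
        ≤ 2 * ‖c‖ / (1 + δ) - t * (δ ^ 2 / (δ * t) + V) := by gcongr
      _ = t * (2 * ‖c‖ / ((1 + δ) * t) - (δ ^ 2 / (δ * t) + V)) := by field_simp
      _ ≤ t * volume.real {x | t < ‖g x‖} := by gcongr
  · calc t * volume.real {x | t < ‖g x‖}
        ≤ t * (2 * ‖c‖ / ((1 - δ) * t) + (δ ^ 2 / (δ * t) + V)) := by gcongr
      _ = 2 * ‖c‖ / (1 - δ) + t * (δ ^ 2 / (δ * t) + V) := by field_simp
      _ ≤ 2 * ‖c‖ / (1 - δ) + 2 * δ := by gcongr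

theorem VanishesAtInftyWeakL1.tendsto_mul_volume {g : ℝ → E} {c : E}
    (h : VanishesAtInftyWeakL1 fun x ↦ g x - x⁻¹ • c) :
    Tendsto (fun t : ℝ ↦ t * volume.real {x | t < ‖g x‖}) (𝓝[>] 0) (𝓝 (2 * ‖c‖)) := by
  have hlower : Tendsto (fun δ : ℝ ↦ 2 * ‖c‖ / (1 + δ) - 2 * δ) (𝓝[>] 0) (𝓝 (2 * ‖c‖)) := by
    have : ContinuousAt (fun δ : ℝ ↦ 2 * ‖c‖ / (1 + δ) - 2 * δ) 0 := by
      fun_prop (disch := norm_num)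
    simpa using this.tendsto.mono_left nhdsWithin_le_nhds
  have hupper : Tendsto (fun δ : ℝ ↦ 2 * ‖c‖ / (1 - δ) + 2 * δ) (𝓝[>] 0) (𝓝 (2 * ‖c‖)) := by
    have : ContinuousAt (fun δ : ℝ ↦ 2 * ‖c‖ / (1 - δ) + 2 * δ) 0 := by
      fun_prop (disch := norm_num)
    simpa using this.tendsto.mono_left nhdsWithin_le_nhds
  have hδ : ∀ᶠ δ in 𝓝[>] (0 : ℝ), δ ∈ Ioo 0 1 := Ioo_mem_nhdsGT one_pos
  refine tendsto_order.2 ⟨fun a ha ↦ ?_, fun a ha ↦ ?_⟩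
  · obtain ⟨δ, haδ, hδ0, hδ1⟩ := ((hlower.eventually (lt_mem_nhds ha)).and hδ).exists
    exact (h.eventually_mul_volume_mem_Icc hδ0 hδ1).mono fun t ht ↦ haδ.trans_le ht.1
  · obtain ⟨δ, haδ, hδ0, hδ1⟩ := ((hupper.eventually (gt_mem_nhds ha)).and hδ).exists
    exact (h.eventually_mul_volume_mem_Icc hδ0 hδ1).mono fun t ht ↦ ht.2.trans_lt haδ

end InverseTail

theorem half_norm_le_norm_sub {E : Type*} [SeminormedAddCommGroup E] {u v : E} {R : ℝ}
    (hu : ‖u‖ ≤ R) (hv : 2 * R ≤ ‖v‖) : ‖v‖ / 2 ≤ ‖u - v‖ := by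
  have := norm_sub_norm_le v u
  rw [norm_sub_rev] at this
  linarith

section TruncatedHilbert

open Set

variable {E : Type*} [NormedAddCommGroup E] [NormedSpace ℝ E] {f g : ℝ → E} {x ε : ℝ}

/-- The truncated Hilbert transform `∫_{|y - x| > ε} f y / (y - x) dy`. -/
noncomputable def truncatedHilbert (f : ℝ → E) (x ε : ℝ) : E :=
  ∫ y in {y | ε < |y - x|}, (y - x)⁻¹ • f y

/-- The principal value integral `p.v. ∫ f y / (y - x) dy` exists and equals `a`. -/
def HasHilbertTransformAt (f : ℝ → E) (a : E) (x : ℝ) : Prop :=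
  Tendsto (truncatedHilbert f x) (𝓝[>] 0) (𝓝 a)

/-- The conjugate Poisson integral of `f` at height `ε`, a smooth analogue of
`truncatedHilbert`. -/
noncomputable def conjPoisson (f : ℝ → E) (x ε : ℝ) : E :=
  ∫ y, ((y - x) / ((y - x) ^ 2 + ε ^ 2)) • f y

theorem measurableSet_lt_abs_sub (x ε : ℝ) : MeasurableSet {y : ℝ | ε < |y - x|} :=
  measurableSet_lt measurable_const (by fun_prop)

theorem norm_inv_sub_smul_le (hε : 0 < ε) {y : ℝ} (hy : ε < |y - x|) (v : E) :
    ‖(y - x)⁻¹ • v‖ ≤ ε⁻¹ * ‖v‖ := by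
  rw [norm_smul, norm_inv, Real.norm_eq_abs]
  gcongr

theorem integrableOn_inv_sub_smul (hf : Integrable f) (hε : 0 < ε) (x : ℝ) :
    IntegrableOn (fun y ↦ (y - x)⁻¹ • f y) {y | ε < |y - x|} :=
  (hf.norm.const_mul ε⁻¹).integrableOn.mono'
    ((by fun_prop : AEStronglyMeasurable (fun y : ℝ ↦ (y - x)⁻¹) volume).smul hf.1).restrict
    ((ae_restrict_mem (measurableSet_lt_abs_sub x ε)).mono fun y hy ↦
      norm_inv_sub_smul_le hε hy (f y))

theorem norm_truncatedHilbert_le (hf : Integrable f) (hε : 0 < ε) (x : ℝ) :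
    ‖truncatedHilbert f x ε‖ ≤ ε⁻¹ * ∫ y, ‖f y‖ := by
  have hbound := hf.norm.const_mul ε⁻¹
  calc ‖truncatedHilbert f x ε‖ ≤ ∫ y in {y | ε < |y - x|}, ε⁻¹ * ‖f y‖ :=
        norm_integral_le_of_norm_le hbound.integrableOn
          ((ae_restrict_mem (measurableSet_lt_abs_sub x ε)).mono fun y hy ↦
            norm_inv_sub_smul_le hε hy (f y))
    _ ≤ ∫ y, ε⁻¹ * ‖f y‖ :=
        setIntegral_le_integral hbound (.of_forall fun y ↦ by positivity)
    _ = ε⁻¹ * ∫ y, ‖f y‖ := integral_const_mul _ _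

theorem HasHilbertTransformAt.sub {a b : E} (hf : Integrable f) (hg : Integrable g)
    (hfa : HasHilbertTransformAt f a x) (hgb : HasHilbertTransformAt g b x) :
    HasHilbertTransformAt (fun y ↦ f y - g y) (a - b) x := by
  refine (Tendsto.sub hfa hgb).congr' ?_
  filter_upwards [self_mem_nhdsWithin] with ε (hε : 0 < ε)
  simp only [truncatedHilbert, smul_sub]
  exact (integral_sub (integrableOn_inv_sub_smul hf hε x)
    (integrableOn_inv_sub_smul hg hε x)).symm

end TruncatedHilbert

section Averaging

open Set

/-- The probability density on `(0, ∞)` whose averages of sharp truncations give the conjugate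
Poisson kernel: `∫_{0 < v < |u| / ε} averagingWeight v dv = u ^ 2 / (u ^ 2 + ε ^ 2)`. -/
noncomputable def averagingWeight (v : ℝ) : ℝ :=
  2 * v / (1 + v ^ 2) ^ 2

theorem averagingWeight_nonneg {v : ℝ} (hv : 0 ≤ v) : 0 ≤ averagingWeight v := by
  unfold averagingWeight
  positivity

theorem continuous_averagingWeight : Continuous averagingWeight := by
  unfold averagingWeight
  fun_prop (disch := intro; positivity)

theorem hasDerivAt_neg_inv_one_add_sq (v : ℝ) :
    HasDerivAt (fun v : ℝ ↦ -(1 + v ^ 2)⁻¹) (averagingWeight v) v := by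
  have : HasDerivAt (fun v : ℝ ↦ 1 + v ^ 2) (2 * v) v := by
    simpa using (hasDerivAt_pow 2 v).const_add 1
  refine (this.fun_inv (by positivity)).fun_neg.congr_deriv ?_
  unfold averagingWeight
  ring

theorem tendsto_neg_inv_one_add_sq :
    Tendsto (fun v : ℝ ↦ -(1 + v ^ 2)⁻¹) atTop (𝓝 0) := by
  simpa using ((tendsto_const_nhds (x := (1 : ℝ))).add_atTop
    (tendsto_pow_atTop two_ne_zero)).inv_tendsto_atTop.neg

theorem integrableOn_averagingWeight : IntegrableOn averagingWeight (Ioi 0) :=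
  integrableOn_Ioi_deriv_of_nonneg' (fun v _ ↦ hasDerivAt_neg_inv_one_add_sq v)
    (fun _ hv ↦ averagingWeight_nonneg (le_of_lt hv)) tendsto_neg_inv_one_add_sq

theorem integral_averagingWeight : ∫ v in Ioi 0, averagingWeight v = 1 := by
  simpa using integral_Ioi_of_hasDerivAt_of_tendsto'
    (fun v _ ↦ hasDerivAt_neg_inv_one_add_sq v) integrableOn_averagingWeight
    tendsto_neg_inv_one_add_sq

theorem setIntegral_averagingWeight_Ioo {a : ℝ} (ha : 0 ≤ a) :
    ∫ v in Ioo 0 a, averagingWeight v = a ^ 2 / (1 + a ^ 2) := by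
  rw [← integral_Ioc_eq_integral_Ioo, ← intervalIntegral.integral_of_le ha,
    intervalIntegral.integral_eq_sub_of_hasDerivAt (fun v _ ↦ hasDerivAt_neg_inv_one_add_sq v)
      (continuous_averagingWeight.intervalIntegrable 0 a)]
  field_simp
  ring

end Averaging

section ConjPoisson

open Set

variable {E : Type*} [NormedAddCommGroup E] [NormedSpace ℝ E] {f g : ℝ → E} {x ε : ℝ}

/-- The integrand of `conjPoisson_eq_setIntegral_truncatedHilbert` as a function on the plane:
`p.1` is the point `y` and `p.2` the truncation parameter `v`. -/
noncomputable def averagedTruncationKernel (f : ℝ → E) (x ε : ℝ) (p : ℝ × ℝ) : E :=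
  {p : ℝ × ℝ | ε * p.2 < |p.1 - x|}.indicator
    (fun p ↦ (averagingWeight p.2 * (p.1 - x)⁻¹) • f p.1) p

theorem norm_averagedTruncationKernel_le (hε : 0 < ε) (x y : ℝ) {v : ℝ} (hv : 0 < v) :
    ‖averagedTruncationKernel f x ε (y, v)‖ ≤ ‖f y‖ * (2 * ε⁻¹ * (1 + v ^ 2)⁻¹) := by
  refine (norm_indicator_eq_indicator_norm _ _).trans_le
    (indicator_apply_le' (fun h ↦ ?_) fun _ ↦ by positivity)
  have h : ε * v < |y - x| := h
  calc ‖(averagingWeight v * (y - x)⁻¹) • f y‖ = averagingWeight v * |y - x|⁻¹ * ‖f y‖ := by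
        rw [norm_smul, norm_mul, norm_inv, Real.norm_of_nonneg (averagingWeight_nonneg hv.le),
          Real.norm_eq_abs]
    _ ≤ averagingWeight v * (ε * v)⁻¹ * ‖f y‖ := by
        have := averagingWeight_nonneg hv.le
        gcongr
    _ = ‖f y‖ * (2 * ε⁻¹ * ((1 + v ^ 2) ^ 2)⁻¹) := by
        unfold averagingWeight
        field_simp
    _ ≤ ‖f y‖ * (2 * ε⁻¹ * (1 + v ^ 2)⁻¹) := by
        gcongr
        exact le_self_pow₀ (by nlinarith) two_ne_zero

theorem integrable_averagedTruncationKernel (hf : Integrable f) (hε : 0 < ε) (x : ℝ) :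
    Integrable (averagedTruncationKernel f x ε) (volume.prod (volume.restrict (Ioi 0))) := by
  have hbound : Integrable (fun p : ℝ × ℝ ↦ ‖f p.1‖ * (2 * ε⁻¹ * (1 + p.2 ^ 2)⁻¹))
      (volume.prod (volume.restrict (Ioi 0))) :=
    hf.norm.mul_prod (integrable_inv_one_add_sq.const_mul _).restrict
  refine hbound.mono' (.indicator (.smul ?_ hf.1.comp_fst) ?_) ?_
  · have := continuous_averagingWeight.measurable
    fun_prop
  · exact measurableSet_lt (by fun_prop) (by fun_prop)
  · have : ∀ᵐ p : ℝ × ℝ ∂volume.prod (volume.restrict (Ioi 0)), p.2 ∈ Ioi 0 :=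
      Measure.quasiMeasurePreserving_snd.ae (ae_restrict_mem measurableSet_Ioi)
    exact this.mono fun p hp ↦ norm_averagedTruncationKernel_le hε x p.1 hp

theorem setIntegral_averagedTruncationKernel_snd [CompleteSpace E] (f : ℝ → E) (x : ℝ)
    (hε : 0 < ε) (y : ℝ) :
    ∫ v in Ioi 0, averagedTruncationKernel f x ε (y, v) =
      ((y - x) / ((y - x) ^ 2 + ε ^ 2)) • f y := by
  have hset : Ioi 0 ∩ {v | ε * v < |y - x|} = Ioo 0 (|y - x| / ε) := by
    ext v
    simp [lt_div_iff₀' hε]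
  calc ∫ v in Ioi 0, averagedTruncationKernel f x ε (y, v)
      = ∫ v in Ioo 0 (|y - x| / ε), (averagingWeight v * (y - x)⁻¹) • f y := by
        rw [← hset, ← setIntegral_indicator (measurableSet_lt (by fun_prop) (by fun_prop))]
        rfl
    _ = ((|y - x| / ε) ^ 2 / (1 + (|y - x| / ε) ^ 2) * (y - x)⁻¹) • f y := by
        rw [integral_smul_const, integral_mul_const,
          setIntegral_averagingWeight_Ioo (by positivity)]
    _ = ((y - x) / ((y - x) ^ 2 + ε ^ 2)) • f y := by
        congr 1
        rw [div_pow, sq_abs]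
        rcases eq_or_ne (y - x) 0 with h | h
        · simp [h]
        · field_simp
          ring

theorem integral_averagedTruncationKernel_fst (f : ℝ → E) (x ε v : ℝ) :
    ∫ y, averagedTruncationKernel f x ε (y, v) =
      averagingWeight v • truncatedHilbert f x (ε * v) := by
  rw [truncatedHilbert, ← integral_smul,
    ← integral_indicator (measurableSet_lt_abs_sub x (ε * v))]
  simp only [← mul_smul]
  rfl

theorem integrable_conjPoisson_integrand (hf : Integrable f) (hε : 0 < ε) (x : ℝ) :
    Integrable fun y ↦ ((y - x) / ((y - x) ^ 2 + ε ^ 2)) • f y := by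
  have hcont : Continuous fun y ↦ (y - x) / ((y - x) ^ 2 + ε ^ 2) := by
    fun_prop (disch := intro; positivity)
  refine hf.bdd_smul ε⁻¹ hcont.aestronglyMeasurable (.of_forall fun y ↦ ?_)
  have : 0 ≤ (|y - x| - ε) ^ 2 := sq_nonneg _
  rw [Real.norm_eq_abs, abs_div, abs_of_pos (by positivity : 0 < (y - x) ^ 2 + ε ^ 2),
    div_le_iff₀ (by positivity), ← div_eq_inv_mul, le_div_iff₀ hε, ← sq_abs (y - x)]
  nlinarith [mul_nonneg (abs_nonneg (y - x)) hε.le]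

theorem conjPoisson_sub (hf : Integrable f) (hg : Integrable g) (hε : 0 < ε) (x : ℝ) :
    conjPoisson (fun y ↦ f y - g y) x ε = conjPoisson f x ε - conjPoisson g x ε := by
  simp only [conjPoisson, smul_sub]
  exact integral_sub (integrable_conjPoisson_integrand hf hε x)
    (integrable_conjPoisson_integrand hg hε x)

theorem conjPoisson_eq_setIntegral_truncatedHilbert [CompleteSpace E] (hf : Integrable f)
    (hε : 0 < ε) (x : ℝ) :
    conjPoisson f x ε = ∫ v in Ioi 0, averagingWeight v • truncatedHilbert f x (ε * v) := by
  simp only [conjPoisson, ← setIntegral_averagedTruncationKernel_snd f x hε,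
    ← integral_averagedTruncationKernel_fst]
  exact integral_integral_swap (integrable_averagedTruncationKernel hf hε x)

theorem HasHilbertTransformAt.exists_norm_truncatedHilbert_le {a : E}
    (h : HasHilbertTransformAt f a x) (hf : Integrable f) :
    ∃ C, ∀ ε > 0, ‖truncatedHilbert f x ε‖ ≤ C := by
  obtain ⟨δ, hδ, hsmall⟩ := mem_nhdsGT_iff_exists_Ioo_subset.1
    (h.norm.eventually (gt_mem_nhds (lt_add_one ‖a‖)))
  refine ⟨max (‖a‖ + 1) (δ⁻¹ * ∫ y, ‖f y‖), fun ε hε ↦ ?_⟩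
  have hδ : 0 < δ := hδ
  rcases lt_or_ge ε δ with hεδ | hδε
  · exact le_max_of_le_left (hsmall ⟨hε, hεδ⟩).le
  · refine le_max_of_le_right ((norm_truncatedHilbert_le hf hε x).trans ?_)
    gcongr

theorem HasHilbertTransformAt.tendsto_conjPoisson [CompleteSpace E] {a : E}
    (h : HasHilbertTransformAt f a x) (hf : Integrable f) :
    Tendsto (conjPoisson f x) (𝓝[>] 0) (𝓝 a) := by
  obtain ⟨C, hC⟩ := h.exists_norm_truncatedHilbert_le hf
  have hlim : Tendsto (fun ε ↦ ∫ v in Ioi 0, averagingWeight v • truncatedHilbert f x (ε * v))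
      (𝓝[>] 0) (𝓝 (∫ v in Ioi 0, averagingWeight v • a)) := by
    refine tendsto_integral_filter_of_dominated_convergence (fun v ↦ averagingWeight v * C)
      ?_ ?_ (integrableOn_averagingWeight.mul_const C) ?_
    · filter_upwards [self_mem_nhdsWithin] with ε hε
      simp only [← integral_averagedTruncationKernel_fst]
      exact (integrable_averagedTruncationKernel hf hε x).swap.integral_prod_left.1
    · filter_upwards [self_mem_nhdsWithin] with ε hε
      filter_upwards [ae_restrict_mem measurableSet_Ioi] with v hv
      have hw := averagingWeight_nonneg (le_of_lt hv)
      rw [norm_smul, Real.norm_of_nonneg hw]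
      exact mul_le_mul_of_nonneg_left (hC _ (mul_pos hε hv)) hw
    · filter_upwards [ae_restrict_mem measurableSet_Ioi] with v (hv : 0 < v)
      have hεv : Tendsto (· * v) (𝓝[>] 0) (𝓝[>] (0 : ℝ)) := by
        refine tendsto_nhdsWithin_iff.2 ⟨?_, ?_⟩
        · simpa using ((continuous_mul_const v).tendsto 0).mono_left nhdsWithin_le_nhds
        · filter_upwards [self_mem_nhdsWithin] with ε hε using mul_pos hε hv
      exact (Tendsto.comp h hεv).const_smul (averagingWeight v)
  rw [integral_smul_const, integral_averagingWeight, one_smul] at hlim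
  refine hlim.congr' ?_
  filter_upwards [self_mem_nhdsWithin] with ε hε
  exact (conjPoisson_eq_setIntegral_truncatedHilbert hf hε x).symm

end ConjPoisson

section HalfPlane

open Complex (I)
open Set

theorem norm_intervalIntegral_le_of_differentiableOn_upperHalfPlane {E : Type*}
    [NormedAddCommGroup E] [NormedSpace ℂ E] [CompleteSpace E] {U : ℂ → E}
    (hU : DifferentiableOn ℂ U {z | 0 ≤ z.im}) {N c : ℝ} (hN : 0 ≤ N)
    (hc : ∀ z : ℂ, 0 ≤ z.im → N ≤ ‖z‖ → ‖U z‖ ≤ c) :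
    ‖∫ x : ℝ in -N..N, U x‖ ≤ 4 * N * c := by
  have htop : ‖∫ x : ℝ in -N..N, U (x + N * I)‖ ≤ c * |N - -N| :=
    intervalIntegral.norm_integral_le_of_norm_le_const fun x _ ↦
      hc _ (by simpa using hN) <| by
        simpa [abs_of_nonneg hN] using Complex.abs_im_le_norm (x + N * I)
  have hside (s : ℝ) (hs : |s| = N) : ‖∫ y : ℝ in 0..N, U (s + y * I)‖ ≤ c * |N - 0| :=
    intervalIntegral.norm_integral_le_of_norm_le_const fun y hy ↦ by
      rw [uIoc_of_le hN] at hy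
      exact hc _ (by simpa using hy.1.le) <| by
        simpa [hs] using Complex.abs_re_le_norm (s + y * I)
  have hright := hside N (abs_of_nonneg hN)
  have hleft := hside (-N) (by rw [abs_neg, abs_of_nonneg hN])
  have hrect := Complex.integral_boundary_rect_eq_zero_of_differentiableOn U (-N : ℝ) (N + N * I)
    (hU.mono fun z hz ↦ by
      have : z.im ∈ uIcc 0 N := by simpa using hz.2
      exact (uIcc_of_le hN ▸ this).1)
  simp only [Complex.ofReal_re, Complex.ofReal_im, Complex.add_re, Complex.add_im,
    Complex.re_ofReal_mul, Complex.im_ofReal_mul, Complex.I_re, Complex.I_im, mul_zero, mul_one,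
    add_zero, zero_add, Complex.ofReal_zero, zero_mul] at hrect
  have hbase : ∫ x : ℝ in -N..N, U x = (∫ x : ℝ in -N..N, U (x + N * I)) -
      I • (∫ y : ℝ in 0..N, U (N + y * I)) + I • ∫ y : ℝ in 0..N, U ((-N : ℝ) + y * I) := by
    rw [← sub_eq_zero, ← hrect]
    abel
  rw [abs_of_nonneg (by linarith)] at htop hright hleft
  rw [hbase]
  refine (norm_add_le _ _).trans ?_
  refine (add_le_add_left (norm_sub_le _ _) _).trans ?_
  simp only [norm_smul, Complex.norm_I, one_mul]
  linarith

theorem lintegral_re_le_of_differentiableOn_upperHalfPlane {U : ℂ → ℂ}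
    (hU : DifferentiableOn ℂ U {z | 0 ≤ z.im}) {K ρ : ℝ}
    (hK : ∀ z : ℂ, 0 ≤ z.im → ρ ≤ ‖z‖ → ‖z‖ * ‖U z‖ ≤ K) (hre : ∀ x : ℝ, 0 ≤ (U x).re) :
    ∫⁻ x : ℝ, ENNReal.ofReal (U x).re ≤ ENNReal.ofReal (4 * K) := by
  have hcont : Continuous fun x : ℝ ↦ U x :=
    hU.continuousOn.comp_continuous Complex.continuous_ofReal (by simp)
  have hcover : AECover volume atTop fun N : ℝ ↦ Ioc (-N) N :=
    aecover_Ioc tendsto_neg_atTop_atBot tendsto_id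
  have hlim := hcover.lintegral_tendsto_of_countably_generated
    (f := fun x : ℝ ↦ ENNReal.ofReal (U x).re)
    (Complex.continuous_re.comp hcont).measurable.ennreal_ofReal.aemeasurable
  refine le_of_tendsto hlim ?_
  filter_upwards [eventually_ge_atTop ρ, eventually_gt_atTop 0] with N hρN hN
  have hint : IntegrableOn (fun x : ℝ ↦ U x) (Ioc (-N) N) := hcont.integrableOn_Ioc
  have hint_re : IntegrableOn (fun x : ℝ ↦ (U x).re) (Ioc (-N) N) := hint.re
  have hnorm : ‖∫ x : ℝ in -N..N, U x‖ ≤ 4 * N * (K / N) := by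
    refine norm_intervalIntegral_le_of_differentiableOn_upperHalfPlane hU hN.le fun z hz hNz ↦ ?_
    have hz' : 0 < ‖z‖ := hN.trans_le hNz
    have hK' := hK z hz (hρN.trans hNz)
    have : 0 ≤ K := le_trans (by positivity) hK'
    calc ‖U z‖ ≤ K / ‖z‖ := (le_div_iff₀' hz').2 hK'
      _ ≤ K / N := by gcongr
  rw [← ofReal_integral_eq_lintegral_ofReal hint_re (.of_forall fun x ↦ hre x)]
  refine ENNReal.ofReal_le_ofReal ?_
  calc ∫ x : ℝ in Ioc (-N) N, (U x).re = (∫ x : ℝ in -N..N, U x).re := by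
        rw [intervalIntegral.integral_of_le (by linarith)]
        exact integral_re hint
    _ ≤ 4 * N * (K / N) := (Complex.re_le_norm _).trans hnorm
    _ = 4 * K := by field_simp

theorem le_norm_add_mul_I {w : ℂ} (hw : 0 ≤ w.im) (t : ℝ) : t ≤ ‖w + t * I‖ := by
  calc t ≤ (w + t * I).im := by simpa using hw
    _ ≤ ‖w + t * I‖ := Complex.im_le_norm _

theorem re_div_add_mul_I (w : ℂ) (t : ℝ) :
    (w / (w + t * I)).re = (‖w‖ ^ 2 + t * w.im) / ‖w + t * I‖ ^ 2 := by
  simp only [Complex.div_re, ← Complex.normSq_eq_norm_sq, Complex.normSq_apply, Complex.add_re,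
    Complex.add_im, Complex.re_ofReal_mul, Complex.im_ofReal_mul, Complex.I_re, Complex.I_im]
  ring

theorem re_div_add_mul_I_nonneg {w : ℂ} (hw : 0 ≤ w.im) {t : ℝ} (ht : 0 ≤ t) :
    0 ≤ (w / (w + t * I)).re := by
  rw [re_div_add_mul_I]
  positivity

theorem half_le_re_div_add_mul_I {w : ℂ} (hw : 0 ≤ w.im) {t : ℝ} (ht : 0 < t) (htw : t ≤ ‖w‖) :
    1 / 2 ≤ (w / (w + t * I)).re := by
  have hpos : 0 < ‖w + t * I‖ := ht.trans_le (le_norm_add_mul_I hw t)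
  have hsq : ‖w + t * I‖ ^ 2 = ‖w‖ ^ 2 + 2 * t * w.im + t ^ 2 := by
    simp only [← Complex.normSq_eq_norm_sq, Complex.normSq_apply, Complex.add_re,
      Complex.add_im, Complex.re_ofReal_mul, Complex.im_ofReal_mul, Complex.I_re, Complex.I_im]
    ring
  rw [re_div_add_mul_I, div_le_div_iff₀ two_pos (by positivity), hsq]
  have : t ^ 2 ≤ ‖w‖ ^ 2 := by gcongr
  linarith

end HalfPlane

section ResolventTransform

open Complex (I)
open Metric Set

variable {μ : Measure ℝ} [IsFiniteMeasure μ]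

theorem resolvent_ofReal_eq_inv (z : ℂ) (y : ℝ) : resolvent z y = (y - z)⁻¹ := by
  simp [resolvent]

theorem notMem_algebraMap_image_of_im_pos {z : ℂ} (hz : 0 < z.im) (s : Set ℝ) :
    z ∉ algebraMap ℝ ℂ '' s := by
  rintro ⟨y, -, rfl⟩
  simp at hz

theorem im_resolventTransform_nonneg (μ : Measure ℝ) [IsFiniteMeasure μ] {z : ℂ} (hz : 0 < z.im) :
    0 ≤ (resolventTransform μ z).im := by
  have hint := integrable_resolvent (notMem_algebraMap_image_of_im_pos hz μ.support)
  calc 0 ≤ ∫ y, (resolvent z y).im ∂μ := integral_nonneg fun y ↦ by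
        simp only [resolvent_ofReal_eq_inv, Complex.inv_im, Complex.sub_im, Complex.ofReal_im,
          zero_sub, neg_neg]
        have := Complex.normSq_nonneg (y - z)
        positivity
    _ = (resolventTransform μ z).im := integral_im hint

theorem norm_resolventTransform_le {R : ℝ} (hμ : μ (closedBall 0 R)ᶜ = 0) {z : ℂ} (hz : z ≠ 0)
    (hRz : 2 * R ≤ ‖z‖) : ‖resolventTransform μ z‖ ≤ 2 * μ.real univ / ‖z‖ := by
  have hbound : ∀ᵐ y : ℝ ∂μ, ‖resolvent z y‖ ≤ 2 / ‖z‖ := by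
    filter_upwards [compl_mem_ae_iff.2 hμ] with y hy
    rw [compl_compl, mem_closedBall_zero_iff] at hy
    have hdist : ‖z‖ / 2 ≤ ‖(y : ℂ) - z‖ :=
      half_norm_le_norm_sub ((Complex.norm_real y).trans_le hy) hRz
    rw [resolvent_ofReal_eq_inv, norm_inv, ← inv_div]
    gcongr
  calc ‖resolventTransform μ z‖ ≤ 2 / ‖z‖ * μ.real univ := norm_integral_le_of_norm_le_const hbound
    _ = 2 * μ.real univ / ‖z‖ := by ring

theorem lintegral_re_resolventTransform_div_le {R ε t : ℝ} (hμ : μ (closedBall 0 R)ᶜ = 0)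
    (hε : 0 < ε) (ht : 0 < t) :
    ∫⁻ x : ℝ, ENNReal.ofReal (resolventTransform μ (x + ε * I) /
      (resolventTransform μ (x + ε * I) + t * I)).re ≤
        ENNReal.ofReal (4 * (2 * μ.real univ / t)) := by
  have him {z : ℂ} (hz : 0 ≤ z.im) : 0 < (z + ε * I).im := by simpa using by positivity
  have hF {z : ℂ} (hz : 0 ≤ z.im) : 0 ≤ (resolventTransform μ (z + ε * I)).im :=
    im_resolventTransform_nonneg μ (him hz)
  have hden {z : ℂ} (hz : 0 ≤ z.im) : 0 < ‖resolventTransform μ (z + ε * I) + t * I‖ :=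
    ht.trans_le (le_norm_add_mul_I (hF hz) t)
  have hdiff : DifferentiableOn ℂ (fun z ↦ resolventTransform μ (z + ε * I)) {z | 0 ≤ z.im} :=
    fun z hz ↦ ((hasDerivAt_resolventTransform _
      (notMem_algebraMap_image_of_im_pos (him hz) _)).comp_add_const z
        (ε * I)).differentiableAt.differentiableWithinAt
  refine lintegral_re_le_of_differentiableOn_upperHalfPlane
    (U := fun z ↦ resolventTransform μ (z + ε * I) / (resolventTransform μ (z + ε * I) + t * I))
    (ρ := 2 * R) (hdiff.div (hdiff.add_const _) fun z hz ↦ norm_pos_iff.1 (hden hz))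
    (fun z hz hRz ↦ ?_) fun x ↦ re_div_add_mul_I_nonneg (hF (by simp)) ht.le
  have hz_le : ‖z‖ ≤ ‖z + ε * I‖ := by
    rw [← sq_le_sq₀ (norm_nonneg _) (norm_nonneg _), ← Complex.normSq_eq_norm_sq,
      ← Complex.normSq_eq_norm_sq]
    simp only [Complex.normSq_apply, Complex.add_re, Complex.add_im, Complex.re_ofReal_mul,
      Complex.im_ofReal_mul, Complex.I_re, Complex.I_im, mul_zero, mul_one, add_zero]
    have : 0 ≤ z.im := hz
    nlinarith
  have hne : z + ε * I ≠ 0 := fun h ↦ (him hz).ne' (by simp [h])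
  have : 0 < ‖z + ε * I‖ := norm_pos_iff.2 hne
  calc ‖z‖ * ‖resolventTransform μ (z + ε * I) / (resolventTransform μ (z + ε * I) + t * I)‖
      = ‖z‖ * ‖resolventTransform μ (z + ε * I)‖ /
          ‖resolventTransform μ (z + ε * I) + t * I‖ := by rw [norm_div, mul_div_assoc]
    _ ≤ ‖z + ε * I‖ * (2 * μ.real univ / ‖z + ε * I‖) / t := by
        gcongr
        · exact norm_resolventTransform_le hμ hne (hRz.trans hz_le)
        · exact le_norm_add_mul_I (hF hz) t
    _ = 2 * μ.real univ / t := by field_simp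

theorem volume_lt_norm_resolventTransform_le_of_compl_closedBall {R ε t : ℝ}
    (hμ : μ (closedBall 0 R)ᶜ = 0) (hε : 0 < ε) (ht : 0 < t) :
    volume {x : ℝ | t < ‖resolventTransform μ (x + ε * I)‖} ≤
      ENNReal.ofReal (16 * μ.real univ / t) := by
  have him (x : ℝ) : 0 ≤ (resolventTransform μ (x + ε * I)).im :=
    im_resolventTransform_nonneg μ (by simpa using hε)
  have hmeas : Measurable fun x : ℝ ↦ resolventTransform μ (x + ε * I) := by
    refine Continuous.measurable (continuous_iff_continuousAt.2 fun x ↦ ?_)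
    have : DifferentiableAt ℂ (resolventTransform μ) (x + ε * I) :=
      (hasDerivAt_resolventTransform _
        (notMem_algebraMap_image_of_im_pos (by simpa using hε) _)).differentiableAt
    exact this.continuousAt.comp (f := fun x : ℝ ↦ (x + ε * I : ℂ)) (by fun_prop)
  calc volume {x : ℝ | t < ‖resolventTransform μ (x + ε * I)‖}
      ≤ volume {x : ℝ | ENNReal.ofReal (1 / 2) ≤ ENNReal.ofReal (resolventTransform μ (x + ε * I) /
          (resolventTransform μ (x + ε * I) + t * I)).re} :=
        measure_mono fun x hx ↦ ENNReal.ofReal_le_ofReal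
          (half_le_re_div_add_mul_I (him x) ht (le_of_lt hx))
    _ ≤ ENNReal.ofReal (4 * (2 * μ.real univ / t)) / ENNReal.ofReal (1 / 2) := by
        refine (meas_ge_le_lintegral_div ?_ (by simp) ENNReal.ofReal_ne_top).trans
          (ENNReal.div_le_div_right (lintegral_re_resolventTransform_div_le hμ hε ht) _)
        exact (Complex.measurable_re.comp
          (hmeas.div (hmeas.add_const _))).ennreal_ofReal.aemeasurable
    _ = ENNReal.ofReal (16 * μ.real univ / t) := by
        rw [← ENNReal.ofReal_div_of_pos one_half_pos]
        congr 1
        ring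

theorem volume_lt_norm_resolventTransform_le (μ : Measure ℝ) [IsFiniteMeasure μ] {ε t : ℝ}
    (hε : 0 < ε) (ht : 0 < t) :
    volume {x : ℝ | t < ‖resolventTransform μ (x + ε * I)‖} ≤
      ENNReal.ofReal (16 * μ.real univ / t) := by
  have hint (x : ℝ) : Integrable (resolvent (x + ε * I : ℂ)) μ :=
    integrable_resolvent (notMem_algebraMap_image_of_im_pos (by simpa using hε) _)
  have hcover : AECover μ atTop fun n : ℕ ↦ closedBall (0 : ℝ) n :=
    aecover_closedBall tendsto_natCast_atTop_atTop
  have hlim (x : ℝ) : Tendsto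
      (fun n : ℕ ↦ resolventTransform (μ.restrict (closedBall 0 n)) (x + ε * I : ℂ)) atTop
      (𝓝 (resolventTransform μ (x + ε * I))) :=
    hcover.integral_tendsto_of_countably_generated (hint x)
  refine measure_lt_norm_le_of_tendsto_ae (.of_forall hlim) fun n ↦ ?_
  have hball : μ.restrict (closedBall 0 n) (closedBall 0 n)ᶜ = 0 := by
    rw [Measure.restrict_apply measurableSet_closedBall.compl, compl_inter_self, measure_empty]
  have hmass : (μ.restrict (closedBall 0 n)).real univ ≤ μ.real univ := by
    rw [measureReal_restrict_apply_univ]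
    exact measureReal_mono (subset_univ _)
  refine (volume_lt_norm_resolventTransform_le_of_compl_closedBall hball hε ht).trans ?_
  gcongr

end ResolventTransform

section WeakType

open Complex (I)
open Set

variable {f : ℝ → ℝ} {ε t : ℝ}

theorem re_inv_sub_add_mul_I (y x ε : ℝ) :
    ((y - (x + ε * I) : ℂ)⁻¹).re = (y - x) / ((y - x) ^ 2 + ε ^ 2) := by
  simp [Complex.inv_re, Complex.normSq_apply, sq]

theorem conjPoisson_eq_re_resolventTransform (hf : Integrable f) (hf0 : 0 ≤ f) (hε : 0 < ε)
    (x : ℝ) :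
    conjPoisson f x ε = (resolventTransform
      (volume.withDensity fun y ↦ ENNReal.ofReal (f y)) (x + ε * I : ℂ)).re := by
  have := isFiniteMeasure_withDensity_ofReal hf.2
  have hint := integrable_resolvent (μ := volume.withDensity fun y ↦ ENNReal.ofReal (f y))
    (notMem_algebraMap_image_of_im_pos (z := x + ε * I) (by simpa using hε) _)
  calc conjPoisson f x ε
      = ∫ y, (ENNReal.ofReal (f y)).toReal • (resolvent (x + ε * I : ℂ) y).re := by
        refine integral_congr_ae (.of_forall fun y ↦ ?_)
        simp only [resolvent_ofReal_eq_inv, re_inv_sub_add_mul_I, ENNReal.toReal_ofReal (hf0 y),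
          smul_eq_mul]
        exact mul_comm _ _
    _ = ∫ y, (resolvent (x + ε * I : ℂ) y).re ∂volume.withDensity fun y ↦ ENNReal.ofReal (f y) :=
        (integral_withDensity_eq_integral_toReal_smul₀ hf.1.aemeasurable.ennreal_ofReal
          (.of_forall fun y ↦ ENNReal.ofReal_lt_top) _).symm
    _ = _ := integral_re hint

theorem volume_lt_norm_conjPoisson_le_of_nonneg (hf : Integrable f) (hf0 : 0 ≤ f) (hε : 0 < ε)
    (ht : 0 < t) :
    volume {x | t < ‖conjPoisson f x ε‖} ≤ ENNReal.ofReal (16 * (∫ y, f y) / t) := by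
  have := isFiniteMeasure_withDensity_ofReal hf.2
  have hmass : (volume.withDensity fun y ↦ ENNReal.ofReal (f y)).real univ = ∫ y, f y := by
    rw [measureReal_def, withDensity_apply _ .univ, Measure.restrict_univ,
      ← ofReal_integral_eq_lintegral_ofReal hf (.of_forall hf0),
      ENNReal.toReal_ofReal (integral_nonneg hf0)]
  rw [← hmass]
  refine (measure_mono fun x hx ↦ ?_).trans (volume_lt_norm_resolventTransform_le _ hε ht)
  have hx : t < ‖conjPoisson f x ε‖ := hx
  rw [conjPoisson_eq_re_resolventTransform hf hf0 hε] at hx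
  exact hx.trans_le (Complex.abs_re_le_norm _)

theorem volume_lt_norm_conjPoisson_le (hf : Integrable f) (hε : 0 < ε) (ht : 0 < t) :
    volume {x | t < ‖conjPoisson f x ε‖} ≤ ENNReal.ofReal (32 * (∫ y, |f y|) / t) := by
  have hpos : Integrable fun y ↦ (f y)⁺ := hf.pos_part
  have hneg : Integrable fun y ↦ (f y)⁻ := hf.neg_part
  have hsub (x : ℝ) : conjPoisson f x ε =
      conjPoisson (fun y ↦ (f y)⁺) x ε + -conjPoisson (fun y ↦ (f y)⁻) x ε := by
    rw [← sub_eq_add_neg, ← conjPoisson_sub hpos hneg hε]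
    simp only [posPart_sub_negPart]
  have habs : ∫ y, |f y| = (∫ y, (f y)⁺) + ∫ y, (f y)⁻ := by
    rw [← integral_add hpos hneg]
    simp only [posPart_add_negPart]
  calc volume {x | t < ‖conjPoisson f x ε‖}
      ≤ volume {x | t / 2 < ‖conjPoisson (fun y ↦ (f y)⁺) x ε‖} +
          volume {x | t / 2 < ‖conjPoisson (fun y ↦ (f y)⁻) x ε‖} := by
        simpa only [add_halves, ← hsub, norm_neg] using measure_add_lt_norm_add_le volume
          (fun x ↦ conjPoisson (fun y ↦ (f y)⁺) x ε) (fun x ↦ -conjPoisson (fun y ↦ (f y)⁻) x ε)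
          (t / 2) (t / 2)
    _ ≤ ENNReal.ofReal (16 * (∫ y, (f y)⁺) / (t / 2)) +
          ENNReal.ofReal (16 * (∫ y, (f y)⁻) / (t / 2)) :=
        add_le_add
          (volume_lt_norm_conjPoisson_le_of_nonneg hpos (fun y ↦ posPart_nonneg _) hε (half_pos ht))
          (volume_lt_norm_conjPoisson_le_of_nonneg hneg (fun y ↦ negPart_nonneg _) hε (half_pos ht))
    _ = ENNReal.ofReal (32 * (∫ y, |f y|) / t) := by
        have : 0 ≤ ∫ y, (f y)⁺ := integral_nonneg fun y ↦ posPart_nonneg (f y)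
        have : 0 ≤ ∫ y, (f y)⁻ := integral_nonneg fun y ↦ negPart_nonneg (f y)
        rw [← ENNReal.ofReal_add (by positivity) (by positivity), habs]
        congr 1
        field_simp
        ring

theorem measure_lt_norm_le_of_hasHilbertTransformAt {μ : Measure ℝ} {g : ℝ → ℝ} (hμ : μ ≤ volume)
    (hf : Integrable f) (hg : ∀ᵐ x ∂μ, HasHilbertTransformAt f (g x) x) (ht : 0 < t) :
    μ {x | t < ‖g x‖} ≤ ENNReal.ofReal (32 * (∫ y, |f y|) / t) := by
  have hε : Tendsto (fun n : ℕ ↦ 1 / ((n : ℝ) + 1)) atTop (𝓝[>] 0) :=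
    tendsto_nhdsWithin_iff.2 ⟨tendsto_one_div_add_atTop_nhds_zero_nat,
      .of_forall fun n ↦ mem_Ioi.2 Nat.one_div_pos_of_nat⟩
  refine measure_lt_norm_le_of_tendsto_ae (hg.mono fun x hx ↦ (hx.tendsto_conjPoisson hf).comp hε)
    fun n ↦ (hμ _).trans (volume_lt_norm_conjPoisson_le hf Nat.one_div_pos_of_nat ht)

end WeakType

section FarField

open Bornology Metric

variable {E : Type*} [NormedAddCommGroup E] [NormedSpace ℝ E] {f : ℝ → E}

theorem hasHilbertTransformAt_of_notMem_tsupport {x : ℝ} (hx : x ∉ tsupport f) :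
    HasHilbertTransformAt f (∫ y, (y - x)⁻¹ • f y) x := by
  obtain ⟨δ, hδ, hball⟩ := Metric.isOpen_iff.1 (isClosed_tsupport f).isOpen_compl x hx
  refine tendsto_const_nhds.congr' ?_
  filter_upwards [Ioo_mem_nhdsGT hδ] with ε hε
  refine (setIntegral_eq_integral_of_forall_compl_eq_zero fun y hy ↦ ?_).symm
  have hyδ : y ∈ ball x δ := (not_lt.1 hy).trans_lt hε.2
  rw [image_eq_zero_of_notMem_tsupport (hball hyδ), smul_zero]

theorem tendsto_mul_inv_sub_cobounded (y : ℝ) :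
    Tendsto (fun x : ℝ ↦ x * (y - x)⁻¹) (cobounded ℝ) (𝓝 (-1)) := by
  have hlim : Tendsto (fun x : ℝ ↦ (y * x⁻¹ - 1)⁻¹) (cobounded ℝ) (𝓝 (-1)) := by
    simpa only [mul_zero, zero_sub, inv_neg, inv_one] using
      ((tendsto_inv₀_cobounded.const_mul y).sub_const 1).inv₀ (by norm_num)
  refine hlim.congr' ?_
  filter_upwards [eventually_ne_cobounded 0] with x hx
  rw [show y * x⁻¹ - 1 = (y - x) / x by field_simp, inv_div, div_eq_mul_inv]

theorem tendsto_smul_integral_inv_sub_smul_cobounded (hf : Integrable f)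
    (hsupp : HasCompactSupport f) :
    Tendsto (fun x : ℝ ↦ x • ∫ y, (y - x)⁻¹ • f y) (cobounded ℝ) (𝓝 (-∫ y, f y)) := by
  obtain ⟨R, hR⟩ := hsupp.isCompact.isBounded.subset_closedBall 0
  have : (cobounded ℝ).IsCountablyGenerated := comap_norm_atTop (E := ℝ) ▸ inferInstance
  have hdom : ∀ᶠ x in cobounded ℝ, ∀ y, ‖(x * (y - x)⁻¹) • f y‖ ≤ 2 * ‖f y‖ := by
    filter_upwards [tendsto_norm_cobounded_atTop.eventually_ge_atTop (2 * R),
      eventually_ne_cobounded 0] with x hRx hx y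
    by_cases hy : y ∈ tsupport f
    · have hdist : ‖x‖ / 2 ≤ ‖y - x‖ :=
        half_norm_le_norm_sub (mem_closedBall_zero_iff.1 (hR hy)) hRx
      rw [norm_smul, norm_mul, norm_inv]
      gcongr
      calc ‖x‖ * ‖y - x‖⁻¹ ≤ ‖x‖ * (‖x‖ / 2)⁻¹ := by gcongr
        _ = 2 := by field_simp [norm_ne_zero_iff.2 hx]
    · simp [image_eq_zero_of_notMem_tsupport hy]
  have hlim := tendsto_integral_filter_of_dominated_convergence (fun y ↦ 2 * ‖f y‖)
    (F := fun x y ↦ (x * (y - x)⁻¹) • f y)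
    (.of_forall fun x ↦ (by fun_prop : AEStronglyMeasurable (fun y : ℝ ↦ x * (y - x)⁻¹) volume).smul
      hf.1) (hdom.mono fun x hx ↦ .of_forall hx) (hf.norm.const_mul 2)
    (.of_forall fun y ↦ (tendsto_mul_inv_sub_cobounded y).smul_const (f y))
  simpa only [neg_smul, one_smul, mul_smul, integral_smul, integral_neg] using hlim

theorem eventually_norm_integral_inv_sub_smul_add_inv_smul_le (hf : Integrable f)
    (hsupp : HasCompactSupport f) {κ : ℝ} (hκ : 0 < κ) :
    ∀ᶠ x : ℝ in cobounded ℝ,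
      ‖(∫ y, (y - x)⁻¹ • f y) + x⁻¹ • ∫ y, f y‖ ≤ ‖x⁻¹ • κ‖ := by
  have hclose := (tendsto_iff_norm_sub_tendsto_zero.1
    (tendsto_smul_integral_inv_sub_smul_cobounded hf hsupp)).eventually (gt_mem_nhds hκ)
  filter_upwards [hclose, eventually_ne_cobounded 0] with x hxκ hx
  rw [sub_neg_eq_add] at hxκ
  calc ‖(∫ y, (y - x)⁻¹ • f y) + x⁻¹ • ∫ y, f y‖
      = ‖x⁻¹‖ * ‖x • (∫ y, (y - x)⁻¹ • f y) + ∫ y, f y‖ := by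
        rw [← norm_smul, smul_add, inv_smul_smul₀ hx]
    _ ≤ ‖x⁻¹‖ * ‖κ‖ := by gcongr; exact hxκ.le.trans (Real.le_norm_self κ)
    _ = ‖x⁻¹ • κ‖ := (norm_smul _ _).symm

end FarField

section Asymptotics

open Bornology Metric Set

variable {f g : ℝ → ℝ}

theorem hasHilbertTransformAt_iff_tendsto_integral_div {a x : ℝ} :
    HasHilbertTransformAt f a x ↔
      Tendsto (fun ε : ℝ ↦ ∫ y in {y | ε < |y - x|}, f y / (y - x)) (𝓝[>] 0) (𝓝 a) := by
  simp only [div_eq_inv_mul]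
  rfl

theorem exists_hasHilbertTransformAt_near_neg_inv_smul_integral (hf : Integrable f) {κ : ℝ}
    (hκ : 0 < κ) :
    ∃ f₁ h : ℝ → ℝ, Integrable f₁ ∧ ∫ y, |f y - f₁ y| ≤ κ ∧
      ∀ᶠ x in cobounded ℝ, HasHilbertTransformAt f₁ (h x) x ∧
        ‖h x - x⁻¹ • (-∫ y, f y)‖ ≤ ‖x⁻¹ • (2 * κ)‖ := by
  obtain ⟨f₁, hsupp, hdist, -, hf₁⟩ := hf.exists_hasCompactSupport_integral_sub_le hκ
  refine ⟨f₁, fun x ↦ ∫ y, (y - x)⁻¹ • f₁ y, hf₁, hdist, ?_⟩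
  have hintegral : ‖(∫ y, f y) - ∫ y, f₁ y‖ ≤ κ := by
    rw [← integral_sub hf hf₁]
    exact (norm_integral_le_integral_norm _).trans hdist
  have hoff : ∀ᶠ x in cobounded ℝ, x ∉ tsupport f₁ :=
    Bornology.isBounded_def.1 hsupp.isCompact.isBounded
  filter_upwards [hoff, eventually_norm_integral_inv_sub_smul_add_inv_smul_le hf₁ hsupp hκ]
    with x hx hfar
  refine ⟨hasHilbertTransformAt_of_notMem_tsupport hx, ?_⟩
  calc ‖(∫ y, (y - x)⁻¹ • f₁ y) - x⁻¹ • (-∫ y, f y)‖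
      = ‖((∫ y, (y - x)⁻¹ • f₁ y) + x⁻¹ • ∫ y, f₁ y) +
          x⁻¹ • ((∫ y, f y) - ∫ y, f₁ y)‖ := by
        congr 1
        simp only [smul_neg, smul_sub]
        abel
    _ ≤ ‖x⁻¹ • κ‖ + ‖x⁻¹‖ * κ := by
        refine (norm_add_le _ _).trans (add_le_add hfar ?_)
        rw [norm_smul]
        gcongr
    _ = ‖x⁻¹ • (2 * κ)‖ := by
        rw [norm_smul, norm_smul, norm_mul, Real.norm_of_nonneg hκ.le, Real.norm_two]
        ring

theorem vanishesAtInftyWeakL1_sub_inv_smul_neg_integral (hf : Integrable f)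
    (hg : ∀ᵐ x, HasHilbertTransformAt f (g x) x) :
    VanishesAtInftyWeakL1 fun x ↦ g x - x⁻¹ • (-∫ y, f y) := by
  intro κ hκ
  -- The near part contributes `64 * (κ / 72) / t` and the tail `8 * (κ / 72) / t`.
  obtain ⟨f₁, h, hf₁, hdist, hfar⟩ :=
    exists_hasHilbertTransformAt_near_neg_inv_smul_integral hf (show 0 < κ / 72 by positivity)
  obtain ⟨R, -, hR⟩ := (hasBasis_cobounded_compl_closedBall 0).eventually_iff.1 hfar
  refine ⟨R, fun t ht ↦ ?_⟩
  set ν := volume.restrict (closedBall (0 : ℝ) R)ᶜ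
  have hmem : ∀ᵐ x ∂ν, x ∈ (closedBall (0 : ℝ) R)ᶜ :=
    ae_restrict_mem measurableSet_closedBall.compl
  have hnear : ν {x | t / 2 < ‖g x - h x‖} ≤ ENNReal.ofReal (32 * (κ / 72) / (t / 2)) := by
    have hgh : ∀ᵐ x ∂ν, HasHilbertTransformAt (fun y ↦ f y - f₁ y) (g x - h x) x := by
      filter_upwards [ae_restrict_of_ae hg, hmem] with x hgx hx using hgx.sub hf hf₁ (hR hx).1
    refine (measure_lt_norm_le_of_hasHilbertTransformAt Measure.restrict_le_self (hf.sub hf₁) hgh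
      (half_pos ht)).trans ?_
    gcongr
    exact hdist
  have htail : ν {x | t / 2 < ‖h x - x⁻¹ • (-∫ y, f y)‖} ≤
      ENNReal.ofReal (2 * ‖2 * (κ / 72)‖ / (t / 2)) := by
    rw [← volume_lt_norm_inv_smul _ (half_pos ht)]
    refine le_trans (measure_mono_ae ?_) (Measure.restrict_le_self _)
    filter_upwards [hmem] with x hx htx using lt_of_lt_of_le htx (hR hx).2
  calc ν {x | t < ‖g x - x⁻¹ • (-∫ y, f y)‖}
      ≤ ν {x | t / 2 < ‖g x - h x‖} + ν {x | t / 2 < ‖h x - x⁻¹ • (-∫ y, f y)‖} := by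
        simpa only [add_halves, sub_add_sub_cancel] using measure_add_lt_norm_add_le ν
          (fun x ↦ g x - h x) (fun x ↦ h x - x⁻¹ • (-∫ y, f y)) (t / 2) (t / 2)
    _ ≤ ENNReal.ofReal (32 * (κ / 72) / (t / 2)) +
          ENNReal.ofReal (2 * ‖2 * (κ / 72)‖ / (t / 2)) := add_le_add hnear htail
    _ = ENNReal.ofReal (κ / t) := by
        rw [← ENNReal.ofReal_add (by positivity) (by positivity),
          Real.norm_of_nonneg (by positivity)]
        congr 1
        field_simp
        norm_num

theorem tendsto_mul_volume_lt_abs_hilbertTransform (hf : Integrable f)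
    (hg : ∀ᵐ x, HasHilbertTransformAt f (g x) x) :
    Tendsto (fun t : ℝ ↦ t * volume.real {x | t < |g x|}) (𝓝[>] 0) (𝓝 (2 * |∫ y, f y|)) := by
  have := (vanishesAtInftyWeakL1_sub_inv_smul_neg_integral hf hg).tendsto_mul_volume
  rwa [norm_neg] at this

end Asymptotics

/-- If `f ∈ L¹(ℝ)` has nonzero integral and `g` is its Hilbert transform
(the principal value integral `g(x) = p.v.∫ f(y)/(y-x) dy`), then
`limsup_{t→0⁺} t·|{|g|>t}| ≥ 2|∫ f| > 0`; in particular `g` is not integrable. -/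
theorem hilbert_transform_not_weak_zero (f g : ℝ → ℝ) (hf : Integrable f)
    (hfg : ∀ᵐ x : ℝ,
      Tendsto (fun ε : ℝ => ∫ y in {y : ℝ | ε < |y - x|}, f y / (y - x))
        (𝓝[>] (0 : ℝ)) (𝓝 (g x)))
    (hne : ∫ y : ℝ, f y ≠ 0) :
    2 * |∫ y : ℝ, f y| ≤
        Filter.limsup (fun t : ℝ => t * (volume {x : ℝ | t < |g x|}).toReal)
          (𝓝[>] (0 : ℝ)) ∧
      0 < 2 * |∫ y : ℝ, f y| ∧ ¬ Integrable g := by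
  have hg : ∀ᵐ x, HasHilbertTransformAt f (g x) x :=
    hfg.mono fun _ ↦ hasHilbertTransformAt_iff_tendsto_integral_div.2
  have hlim := tendsto_mul_volume_lt_abs_hilbertTransform hf hg
  have hpos : 0 < 2 * |∫ y, f y| := by positivity
  refine ⟨hlim.limsup_eq.ge, hpos, fun hint ↦ hpos.ne' ?_⟩
  have hzero := tendsto_mul_measure_lt_norm_nhdsGT_zero hint
  exact tendsto_nhds_unique hlim hzero
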